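/- arXiv:1006.2165 — 2 statements merged into one kernel-verified Lean document; each statement's English description precedes it below -/
import Mathlib

section
/- Let X be a random vector in ℝ^D distributed according to the multivariate Gaussian measure with mean μ and positive-definite covariance Σ, let W be a random vector in ℝ^D independent of X and distributed according to the multivariate Gaussian measure with mean 0 and positive-definite covariance Q, and let F be a D×D real matrix. Then the joint random vector (X, F X + W), i.e., the pushforward of the product measure under the map (x, w) ↦ (x, F x + w), is distributed according to the multivariate Gaussian measure on ℝ^{2D} with mean (μ, Fμ) and block covariance matrix with blocks Σ, Σ Fᵀ, F Σ, and F Σ Fᵀ + Q. -/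
/-! The map `(x, w) ↦ (x, F x + w)` is a shear followed by the identification
`ℝ^D × ℝ^D ≃ ℝ^(2D)`, so it preserves Lebesgue measure (`measurePreserving_joint`). It therefore
suffices to compare densities (`gaussPdf_joint`): the joint density at `(x, F x + w)` must be
`N(x; μ, S) * N(w; 0, Q)`.

The normalising constants agree because `Q` is the Schur complement of `S` in the block covariance
matrix, whose determinant is thus `det S * det Q`. The exponents agree because, with `a = x - μ`, the
block covariance matrix sends `(S⁻¹ a - Fᵀ Q⁻¹ w, Q⁻¹ w)` to `(a, F a + w)`; pairing
these two vectors leaves `aᵀ S⁻¹ a + wᵀ Q⁻¹ w`. -/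

open MeasureTheory Matrix Real

/-- The Gaussian density `N(x; μ, S) = det(2πS)^{-1/2} exp(-½ (x-μ)ᵀ S⁻¹ (x-μ))`. -/
noncomputable def gaussPdf {ι : Type*} [Fintype ι] [DecidableEq ι]
    (μ : ι → ℝ) (S : Matrix ι ι ℝ) (x : ι → ℝ) : ℝ :=
  (((2 * π) • S).det) ^ (-(1/2) : ℝ) *
    Real.exp (-(1/2) * ((x - μ) ⬝ᵥ (S⁻¹ *ᵥ (x - μ))))

/-- The multivariate Gaussian measure with mean `μ` and covariance `S`: the measure with
density `N(·; μ, S)` with respect to Lebesgue measure. -/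
noncomputable def gaussMeasure {ι : Type*} [Fintype ι] [DecidableEq ι]
    (μ : ι → ℝ) (S : Matrix ι ι ℝ) : Measure (ι → ℝ) :=
  volume.withDensity fun x => ENNReal.ofReal (gaussPdf μ S x)

theorem measurable_gaussPdf {ι : Type*} [Fintype ι] [DecidableEq ι]
    (μ : ι → ℝ) (S : Matrix ι ι ℝ) : Measurable (gaussPdf μ S) := by
  unfold gaussPdf
  apply Continuous.measurable
  fun_prop

theorem measurePreserving_joint {D : ℕ} (F : Matrix (Fin D) (Fin D) ℝ) :
    MeasurePreserving
      (fun p : (Fin D → ℝ) × (Fin D → ℝ) =>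
        (Sum.elim p.1 (F *ᵥ p.1 + p.2) : Fin D ⊕ Fin D → ℝ))
      (volume.prod volume) volume := by
  have hshear : MeasurePreserving
      (fun p : (Fin D → ℝ) × (Fin D → ℝ) => (p.1, F *ᵥ p.1 + p.2))
      (volume.prod volume) (volume.prod volume) := by
    refine MeasurePreserving.skew_product (g := fun x w => F *ᵥ x + w)
      (MeasurePreserving.id volume) ?_ ?_
    · apply Continuous.measurable
      fun_prop
    · exact Filter.Eventually.of_forall fun x =>
        (measurePreserving_add_left volume (F *ᵥ x)).map_eq
  have hsum := volume_measurePreserving_sumPiEquivProdPi_symm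
    (fun _ : Fin D ⊕ Fin D => ℝ)
  convert hsum.comp hshear using 1
  ext p i
  cases i <;> rfl

theorem det_jointCov {D : ℕ} (S Q F : Matrix (Fin D) (Fin D) ℝ) (hS : IsUnit S.det) :
    (fromBlocks S (S * Fᵀ) (F * S) (F * S * Fᵀ + Q)).det = S.det * Q.det := by
  have : Invertible S := invertibleOfIsUnitDet S hS
  rw [det_fromBlocks₁₁, ← Matrix.mul_assoc, Matrix.mul_assoc F S (⅟S), mul_invOf_self,
    Matrix.mul_one, add_sub_cancel_left]

/-- The vector `(S⁻¹ a - Fᵀ Q⁻¹ w, Q⁻¹ w)` solves the linear system with the joint covariance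
matrix and right-hand side `(a, F a + w)`. -/
theorem jointCov_inv_mulVec {D : ℕ} (S Q F : Matrix (Fin D) (Fin D) ℝ)
    (hS : IsUnit S.det) (hQ : IsUnit Q.det) (a w : Fin D → ℝ) :
    (fromBlocks S (S * Fᵀ) (F * S) (F * S * Fᵀ + Q))⁻¹ *ᵥ Sum.elim a (F *ᵥ a + w)
      = Sum.elim (S⁻¹ *ᵥ a - Fᵀ *ᵥ (Q⁻¹ *ᵥ w)) (Q⁻¹ *ᵥ w) := by
  have hdet : IsUnit (fromBlocks S (S * Fᵀ) (F * S) (F * S * Fᵀ + Q)).det := by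
    rw [det_jointCov S Q F hS]
    exact hS.mul hQ
  have hSa : S *ᵥ (S⁻¹ *ᵥ a) = a := by
    rw [mulVec_mulVec, mul_nonsing_inv S hS, one_mulVec]
  have hQw : Q *ᵥ (Q⁻¹ *ᵥ w) = w := by
    rw [mulVec_mulVec, mul_nonsing_inv Q hQ, one_mulVec]
  have hsolve : Sum.elim a (F *ᵥ a + w) =
      fromBlocks S (S * Fᵀ) (F * S) (F * S * Fᵀ + Q) *ᵥ
        Sum.elim (S⁻¹ *ᵥ a - Fᵀ *ᵥ (Q⁻¹ *ᵥ w)) (Q⁻¹ *ᵥ w) := by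
    rw [fromBlocks_mulVec]
    simp only [Sum.elim_comp_inl, Sum.elim_comp_inr, mulVec_sub, add_mulVec,
      ← mulVec_mulVec, hSa, hQw]
    congr 1 <;> abel
  rw [hsolve, mulVec_mulVec, nonsing_inv_mul _ hdet, one_mulVec]

theorem gaussPdf_joint {D : ℕ} (μ : Fin D → ℝ) (S Q : Matrix (Fin D) (Fin D) ℝ)
    (hS : S.PosDef) (hQ : Q.PosDef) (F : Matrix (Fin D) (Fin D) ℝ) (x w : Fin D → ℝ) :
    gaussPdf (Sum.elim μ (F *ᵥ μ))
        (fromBlocks S (S * Fᵀ) (F * S) (F * S * Fᵀ + Q)) (Sum.elim x (F *ᵥ x + w))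
      = gaussPdf μ S x * gaussPdf 0 Q w := by
  have hSu : IsUnit S.det := hS.det_pos.ne'.isUnit
  have hQu : IsUnit Q.det := hQ.det_pos.ne'.isUnit
  have hdiff : (Sum.elim x (F *ᵥ x + w) - Sum.elim μ (F *ᵥ μ) : Fin D ⊕ Fin D → ℝ)
      = Sum.elim (x - μ) (F *ᵥ (x - μ) + w) := by
    rw [mulVec_sub]
    ext i
    cases i <;> simp
    ring
  have hdet : ((2 * π) • fromBlocks S (S * Fᵀ) (F * S) (F * S * Fᵀ + Q)).det
      = ((2 * π) • S).det * ((2 * π) • Q).det := by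
    simp only [det_smul, det_jointCov S Q F hSu, Fintype.card_sum, pow_add]
    ring
  have hadj : (x - μ) ⬝ᵥ (Fᵀ *ᵥ (Q⁻¹ *ᵥ w)) = (F *ᵥ (x - μ)) ⬝ᵥ (Q⁻¹ *ᵥ w) := by
    rw [dotProduct_mulVec, vecMul_transpose]
  have hSpos : 0 ≤ ((2 * π) • S).det := (hS.smul (by positivity)).det_pos.le
  have hQpos : 0 ≤ ((2 * π) • Q).det := (hQ.smul (by positivity)).det_pos.le
  unfold gaussPdf
  rw [hdiff, jointCov_inv_mulVec S Q F hSu hQu, hdet, Real.mul_rpow hSpos hQpos,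
    sumElim_dotProduct_sumElim, dotProduct_sub, add_dotProduct, hadj, sub_zero,
    mul_mul_mul_comm, ← Real.exp_add]
  congr 2
  ring

/-- If `X ~ N(μ, Σ)` and `W ~ N(0, Q)` are independent, then the joint vector
`(X, F X + W)` is Gaussian with mean `(μ, Fμ)` and block covariance
`[[Σ, ΣFᵀ], [FΣ, FΣFᵀ + Q]]`. -/
theorem joint_of_consecutive_states_gaussian
    {D : ℕ} (hD : 0 < D) (μ : Fin D → ℝ)
    (S Q : Matrix (Fin D) (Fin D) ℝ) (hS : S.PosDef) (hQ : Q.PosDef)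
    (F : Matrix (Fin D) (Fin D) ℝ) :
    ((gaussMeasure μ S).prod (gaussMeasure 0 Q)).map
        (fun p : (Fin D → ℝ) × (Fin D → ℝ) => Sum.elim p.1 (F *ᵥ p.1 + p.2))
      = gaussMeasure (Sum.elim μ (F *ᵥ μ))
          (Matrix.fromBlocks S (S * Fᵀ) (F * S) (F * S * Fᵀ + Q)) := by
  have hpres := measurePreserving_joint F
  have hcov := (measurable_gaussPdf (Sum.elim μ (F *ᵥ μ))
    (Matrix.fromBlocks S (S * Fᵀ) (F * S) (F * S * Fᵀ + Q))).ennreal_ofReal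
  have hnonneg : ∀ x, 0 ≤ gaussPdf μ S x := fun x =>
    mul_nonneg (Real.rpow_nonneg (hS.smul (by positivity)).det_pos.le _) (Real.exp_nonneg _)
  unfold gaussMeasure
  rw [prod_withDensity (measurable_gaussPdf μ S).ennreal_ofReal
    (measurable_gaussPdf 0 Q).ennreal_ofReal]
  ext s hs
  rw [Measure.map_apply hpres.measurable hs, withDensity_apply _ (hpres.measurable hs),
    withDensity_apply _ hs, ← hpres.setLIntegral_comp_preimage hs hcov]
  simp only [gaussPdf_joint μ S Q hS hQ F, ENNReal.ofReal_mul (hnonneg _)]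
end

section
/- Let Σ_f and P be positive-definite D×D real matrices (the filter covariance at time t−1 and the predictive covariance at time t), let C be a D×D real matrix (the cross-covariance of consecutive states), set J := C P⁻¹, and assume S := Σ_f − J Cᵀ is positive definite. Let μ_f, μ_p ∈ ℝ^D (filter and predictive means) and let μ_s ∈ ℝ^D, Σ_s a positive-definite D×D matrix (the smoothed mean and covariance at time t). Then for every x ∈ ℝ^D, ∫_{ℝ^D} N(x; μ_f + J (y − μ_p), S) · N(y; μ_s, Σ_s) dy = N(x; μ_f + J (μ_s − μ_p), Σ_f + J (Σ_s − P) Jᵀ), and the matrix Σ_f + J (Σ_s − P) Jᵀ is positive definite. -/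
/-!
Put `J = C P⁻¹`, `S = Σ_f − J Cᵀ` and `T = Σ_s`. Since `P` is symmetric, `Cᵀ = P Jᵀ`, so the claimed
covariance is `V = S + J T Jᵀ`, a positive definite matrix plus a positive semidefinite one. With
`u = x − μ_f − J(μ_s − μ_p)`, `v = V⁻¹ u` and the substitution `y = z + (μ_s + T Jᵀ v)`, the two
quadratic forms in the integrand add up to `uᵀ V⁻¹ u + zᵀ A z` with `A = T⁻¹ + Jᵀ S⁻¹ J`
(`complete_square`; working with `v` rather than `u` avoids the Woodbury identity). The remaining
integral of `exp (-½ zᵀ A z)` is the standard one (`integral_exp_quadratic`), and the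
normalising constants match because `det V = det S · det T · det A` (`det_add_conj`).
-/

open MeasureTheory Matrix Real

/-- Factoring `A = Bᵀ B` with `B` invertible, the change of variables `z ↦ B z` reduces the
integral to a product of one-dimensional Gaussian integrals. -/
theorem integral_exp_quadratic {D : ℕ} {A : Matrix (Fin D) (Fin D) ℝ} (hA : A.PosDef) :
    ∫ z : Fin D → ℝ, Real.exp (-(1/2) * (z ⬝ᵥ (A *ᵥ z))) =
      ((2 * π) ^ D) ^ (1/2 : ℝ) * A.det ^ (-(1/2) : ℝ) := by
  obtain ⟨B, hB, hAB⟩ : ∃ B : Matrix (Fin D) (Fin D) ℝ, B.det ≠ 0 ∧ A = Bᵀ * B := by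
    open MatrixOrder in
    obtain ⟨B, hB, h⟩ :=
      CStarAlgebra.isStrictlyPositive_iff_eq_star_mul_self.mp hA.isStrictlyPositive
    exact ⟨B, ((Matrix.isUnit_iff_isUnit_det B).mp hB).ne_zero, by
      rw [h, Matrix.star_eq_conjTranspose, conjTranspose_eq_transpose_of_trivial]⟩
  have hstd : ∫ z : Fin D → ℝ, Real.exp (-(1/2) * (z ⬝ᵥ z)) = ((2 * π) ^ D) ^ (1/2 : ℝ) := by
    have h1 : ∀ z : Fin D → ℝ, Real.exp (-(1/2) * (z ⬝ᵥ z)) =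
        ∏ i, Real.exp (-(1/2) * (z i) ^ 2) := by
      intro z
      rw [← Real.exp_sum, dotProduct, Finset.mul_sum]
      simp only [pow_two]
    simp_rw [h1]
    rw [integral_fintype_prod_volume_eq_pow (fun t : ℝ => Real.exp (-(1/2) * t ^ 2)),
      integral_gaussian, Fintype.card_fin, show π / (1/2) = 2 * π by ring, Real.sqrt_eq_rpow,
      ← Real.rpow_natCast, ← Real.rpow_natCast, ← Real.rpow_mul (by positivity),
      ← Real.rpow_mul (by positivity), mul_comm (D : ℝ)]
  have hq : ∀ z : Fin D → ℝ, z ⬝ᵥ (A *ᵥ z) = (toLin' B z) ⬝ᵥ (toLin' B z) := by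
    intro z
    rw [toLin'_apply, hAB, ← mulVec_mulVec, dotProduct_mulVec, vecMul_transpose]
  have hcont : Continuous (toLin' B) := LinearMap.continuous_of_finiteDimensional _
  have hmap := integral_map (μ := (volume : Measure (Fin D → ℝ))) hcont.aemeasurable
    (f := fun z : Fin D → ℝ => Real.exp (-(1/2) * (z ⬝ᵥ z)))
    (Continuous.aestronglyMeasurable (by simp only [dotProduct]; fun_prop))
  simp_rw [hq]
  rw [← hmap, Real.map_matrix_volume_pi_eq_smul_volume_pi hB, integral_smul_measure, hstd,
    ENNReal.toReal_ofReal (abs_nonneg _), smul_eq_mul, mul_comm, hAB, det_mul, det_transpose,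
    ← abs_mul_abs_self, Real.mul_rpow (abs_nonneg _) (abs_nonneg _),
    ← Real.rpow_add (abs_pos.mpr hB), abs_inv]
  norm_num [Real.rpow_neg_one]

theorem complete_square {D : ℕ} {S T : Matrix (Fin D) (Fin D) ℝ} (hS : S.PosDef) (hT : T.PosDef)
    (J : Matrix (Fin D) (Fin D) ℝ) (v z : Fin D → ℝ) :
    (S *ᵥ v - J *ᵥ z) ⬝ᵥ (S⁻¹ *ᵥ (S *ᵥ v - J *ᵥ z)) +
      (z + T *ᵥ (Jᵀ *ᵥ v)) ⬝ᵥ (T⁻¹ *ᵥ (z + T *ᵥ (Jᵀ *ᵥ v))) =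
    ((S + J * T * Jᵀ) *ᵥ v) ⬝ᵥ v + z ⬝ᵥ ((T⁻¹ + Jᵀ * S⁻¹ * J) *ᵥ z) := by
  have adj : ∀ (M : Matrix (Fin D) (Fin D) ℝ) (a b : Fin D → ℝ),
      (M *ᵥ a) ⬝ᵥ b = a ⬝ᵥ (Mᵀ *ᵥ b) := by
    intro M a b
    rw [dotProduct_mulVec, vecMul_transpose]
  have hSs : Sᵀ = S := by simpa using hS.isHermitian.eq
  have hTs : Tᵀ = T := by simpa using hT.isHermitian.eq
  have hSu : IsUnit S.det := hS.det_pos.ne'.isUnit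
  have hTu : IsUnit T.det := hT.det_pos.ne'.isUnit
  have cS : ∀ a : Fin D → ℝ, S⁻¹ *ᵥ (S *ᵥ a) = a := fun a => by
    rw [mulVec_mulVec, nonsing_inv_mul _ hSu, one_mulVec]
  have cS' : ∀ a : Fin D → ℝ, S *ᵥ (S⁻¹ *ᵥ a) = a := fun a => by
    rw [mulVec_mulVec, mul_nonsing_inv _ hSu, one_mulVec]
  have cT : ∀ a : Fin D → ℝ, T⁻¹ *ᵥ (T *ᵥ a) = a := fun a => by
    rw [mulVec_mulVec, nonsing_inv_mul _ hTu, one_mulVec]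
  have cT' : ∀ a : Fin D → ℝ, T *ᵥ (T⁻¹ *ᵥ a) = a := fun a => by
    rw [mulVec_mulVec, mul_nonsing_inv _ hTu, one_mulVec]
  simp only [mulVec_sub, mulVec_add, add_mulVec, ← mulVec_mulVec, cS, cT, sub_dotProduct,
    dotProduct_sub, add_dotProduct, dotProduct_add, adj, hSs, hTs, cS', cT', transpose_transpose]
  rw [dotProduct_comm v (J *ᵥ z), adj]
  ring

theorem det_add_conj {D : ℕ} {S T : Matrix (Fin D) (Fin D) ℝ} (hS : S.PosDef) (hT : T.PosDef)
    (J : Matrix (Fin D) (Fin D) ℝ) :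
    (S + J * T * Jᵀ).det = S.det * T.det * (T⁻¹ + Jᵀ * S⁻¹ * J).det := by
  have hSu : IsUnit S.det := hS.det_pos.ne'.isUnit
  have hTu : IsUnit T.det := hT.det_pos.ne'.isUnit
  have h1 : S + J * T * Jᵀ = S * (1 + (S⁻¹ * J) * (T * Jᵀ)) := by
    rw [mul_add, mul_one, ← mul_assoc S, mul_nonsing_inv_cancel_left _ _ hSu, mul_assoc J]
  have h2 : 1 + (T * Jᵀ) * (S⁻¹ * J) = T * (T⁻¹ + Jᵀ * S⁻¹ * J) := by
    rw [mul_add, mul_nonsing_inv _ hTu]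
    simp only [mul_assoc]
  rw [h1, det_mul, det_one_add_mul_comm, h2, det_mul, ← mul_assoc S.det]

/-- The RTS smoother recursion: integrating the Gaussian conditional
`p(x_{t-1} | x_t = y) = N(x; μ_f + J(y − μ_p), Σ_f − J Cᵀ)` with `J = C P⁻¹` against the
smoothed distribution `N(y; μ_s, Σ_s)` yields the Gaussian with mean
`μ_f + J(μ_s − μ_p)` and positive-definite covariance `Σ_f + J(Σ_s − P)Jᵀ`. -/
theorem rts_smoother_recursion
    {D : ℕ} (hD : 0 < D)
    (Sf P : Matrix (Fin D) (Fin D) ℝ) (hSf : Sf.PosDef) (hP : P.PosDef)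
    (C : Matrix (Fin D) (Fin D) ℝ)
    (hSchur : (Sf - (C * P⁻¹) * Cᵀ).PosDef)
    (μf μp μs : Fin D → ℝ)
    (Ss : Matrix (Fin D) (Fin D) ℝ) (hSs : Ss.PosDef) :
    (∀ x : Fin D → ℝ,
      (∫ y : Fin D → ℝ,
          gaussPdf (μf + (C * P⁻¹) *ᵥ (y - μp)) (Sf - (C * P⁻¹) * Cᵀ) x *
            gaussPdf μs Ss y)
        = gaussPdf (μf + (C * P⁻¹) *ᵥ (μs - μp))
            (Sf + (C * P⁻¹) * (Ss - P) * (C * P⁻¹)ᵀ) x) ∧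
    (Sf + (C * P⁻¹) * (Ss - P) * (C * P⁻¹)ᵀ).PosDef := by
  set J := C * P⁻¹ with hJ
  set S := Sf - J * Cᵀ with hS
  have hPs : Pᵀ = P := by simpa using hP.isHermitian.eq
  have hPJ : P * Jᵀ = Cᵀ := by
    rw [hJ, transpose_mul, transpose_nonsing_inv, hPs,
      mul_nonsing_inv_cancel_left _ _ hP.det_pos.ne'.isUnit]
  have hV : Sf + J * (Ss - P) * Jᵀ = S + J * Ss * Jᵀ := by
    rw [hS, mul_sub, sub_mul, mul_assoc J P, hPJ]
    abel
  have hVpos : (S + J * Ss * Jᵀ).PosDef := by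
    have := hSs.posSemidef.mul_mul_conjTranspose_same J
    rw [conjTranspose_eq_transpose_of_trivial] at this
    exact hSchur.add_posSemidef this
  have hApos : (Ss⁻¹ + Jᵀ * S⁻¹ * J).PosDef := by
    have := hSchur.inv.posSemidef.conjTranspose_mul_mul_same J
    rw [conjTranspose_eq_transpose_of_trivial] at this
    exact hSs.inv.add_posSemidef this
  rw [hV]
  refine ⟨fun x => ?_, hVpos⟩
  set V := S + J * Ss * Jᵀ with hVdef
  set A := Ss⁻¹ + Jᵀ * S⁻¹ * J with hAdef
  set u := x - (μf + J *ᵥ (μs - μp)) with hu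
  set v := V⁻¹ *ᵥ u with hv
  have hVv : V *ᵥ v = u := by
    rw [hv, mulVec_mulVec, mul_nonsing_inv _ hVpos.det_pos.ne'.isUnit, one_mulVec]
  -- Centre the integration variable at the mean `μs + Ss Jᵀ v` of the Gaussian factor in `y`.
  rw [← integral_add_right_eq_self _ (μs + Ss *ᵥ (Jᵀ *ᵥ v))]
  have hint : ∀ z : Fin D → ℝ,
      gaussPdf (μf + J *ᵥ (z + (μs + Ss *ᵥ (Jᵀ *ᵥ v)) - μp)) S x *
        gaussPdf μs Ss (z + (μs + Ss *ᵥ (Jᵀ *ᵥ v))) =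
      (((2 * π) • S).det ^ (-(1/2) : ℝ) * ((2 * π) • Ss).det ^ (-(1/2) : ℝ) *
        Real.exp (-(1/2) * (u ⬝ᵥ v))) * Real.exp (-(1/2) * (z ⬝ᵥ (A *ᵥ z))) := by
    intro z
    have e1 : x - (μf + J *ᵥ (z + (μs + Ss *ᵥ (Jᵀ *ᵥ v)) - μp)) = S *ᵥ v - J *ᵥ z := by
      have h : x = S *ᵥ v + J *ᵥ (Ss *ᵥ (Jᵀ *ᵥ v)) + (μf + J *ᵥ (μs - μp)) := by
        rw [← sub_eq_iff_eq_add, ← hu, ← hVv, hVdef, add_mulVec, ← mulVec_mulVec, ← mulVec_mulVec]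
      rw [h]
      simp only [mulVec_sub, mulVec_add]
      abel
    have e2 : z + (μs + Ss *ᵥ (Jᵀ *ᵥ v)) - μs = z + Ss *ᵥ (Jᵀ *ᵥ v) := by abel
    have hsq := complete_square hSchur hSs J v z
    rw [← hVdef, ← hAdef, hVv] at hsq
    rw [gaussPdf, gaussPdf, e1, e2, mul_mul_mul_comm, ← Real.exp_add, ← mul_add, hsq, mul_add,
      Real.exp_add, mul_assoc, mul_assoc, mul_assoc]
  simp_rw [hint]
  rw [integral_const_mul, integral_exp_quadratic hApos, gaussPdf, ← hu, ← hv]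
  simp only [det_smul, Fintype.card_fin]
  rw [hVdef, det_add_conj hSchur hSs J, ← hAdef]
  have hc : (0 : ℝ) < (2 * π) ^ D := by positivity
  have hSd := hSchur.det_pos
  have hTd := hSs.det_pos
  have hAd := hApos.det_pos
  generalize (2 * π) ^ D = c at *
  rw [Real.mul_rpow hc.le hSd.le, Real.mul_rpow hc.le hTd.le, Real.mul_rpow hc.le (by positivity),
    Real.mul_rpow (by positivity) hAd.le, Real.mul_rpow hSd.le hTd.le]
  have hcc : c ^ (-(1/2) : ℝ) * c ^ (1/2 : ℝ) = 1 := by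
    rw [← Real.rpow_add hc]; norm_num
  linear_combination (c ^ (-(1/2) : ℝ) * S.det ^ (-(1/2) : ℝ) * Ss.det ^ (-(1/2) : ℝ) *
    A.det ^ (-(1/2) : ℝ) * Real.exp (-(1/2) * (u ⬝ᵥ v))) * hcc
end
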